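/- Squashed entanglement is upper semicontinuous on the set of states: for every state ρ^{AB} on H_A ⊗ H_B and every c > E_sq(ρ^{AB}), there is a neighbourhood (in trace norm) of ρ^{AB} in the set of states on H_A ⊗ H_B on which E_sq < c. -/

import Mathlib

open Matrix BigOperators Kronecker
open scoped Classical ComplexOrder

noncomputable section

/-- A (quantum) state: positive semidefinite matrix of trace 1. -/
def IsState {n : Type*} [Fintype n] (ρ : Matrix n n ℂ) : Prop :=
  ρ.PosSemidef ∧ ρ.trace = 1

/-- Von Neumann entropy (base 2), via the eigenvalues of a Hermitian matrix. -/
def vonNeumannEntropy {n : Type*} [Fintype n] (ρ : Matrix n n ℂ) : ℝ :=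
  if h : ρ.IsHermitian then ∑ i, -(h.eigenvalues i * Real.logb 2 (h.eigenvalues i)) else 0

/-- Partial trace over the second (right) factor. -/
def ptraceR {A B : Type*} [Fintype A] [Fintype B]
    (ρ : Matrix (A × B) (A × B) ℂ) : Matrix A A ℂ :=
  fun i j => ∑ b, ρ (i, b) (j, b)

/-- Partial trace over the first (left) factor. -/
def ptraceL {A B : Type*} [Fintype A] [Fintype B]
    (ρ : Matrix (A × B) (A × B) ℂ) : Matrix B B ℂ :=
  fun i j => ∑ a, ρ (a, i) (a, j)

variable {A B E : Type*} [Fintype A] [Fintype B] [Fintype E]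

/-- Marginal of a tripartite state on `A × E` (trace out `B`). -/
def margAE (ρ : Matrix (A × B × E) (A × B × E) ℂ) : Matrix (A × E) (A × E) ℂ :=
  fun x y => ∑ b, ρ (x.1, b, x.2) (y.1, b, y.2)

/-- Marginal of a tripartite state on `B × E` (trace out `A`). -/
def margBE (ρ : Matrix (A × B × E) (A × B × E) ℂ) : Matrix (B × E) (B × E) ℂ :=
  fun x y => ∑ a, ρ (a, x.1, x.2) (a, y.1, y.2)

/-- Marginal of a tripartite state on `E` (trace out `A` and `B`). -/
def margE (ρ : Matrix (A × B × E) (A × B × E) ℂ) : Matrix E E ℂ :=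
  fun x y => ∑ a, ∑ b, ρ (a, b, x) (a, b, y)

/-- Marginal of a tripartite state on `A × B` (trace out `E`). -/
def margAB (ρ : Matrix (A × B × E) (A × B × E) ℂ) : Matrix (A × B) (A × B) ℂ :=
  fun x y => ∑ e, ρ (x.1, x.2, e) (y.1, y.2, e)

/-- Quantum conditional mutual information `I(A;B|E) = S(AE)+S(BE)-S(ABE)-S(E)`. -/
def condMutualInfo (ρ : Matrix (A × B × E) (A × B × E) ℂ) : ℝ :=
  vonNeumannEntropy (margAE ρ) + vonNeumannEntropy (margBE ρ)
    - vonNeumannEntropy ρ - vonNeumannEntropy (margE ρ)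

/-- Squashed entanglement: infimum of `(1/2) I(A;B|E)` over all finite-dimensional
extensions of `ρ`. -/
def Esq {A B : Type*} [Fintype A] [Fintype B] (ρ : Matrix (A × B) (A × B) ℂ) : ℝ :=
  sInf { x : ℝ | ∃ (d : ℕ) (ρE : Matrix (A × B × Fin d) (A × B × Fin d) ℂ),
    IsState ρE ∧ margAB ρE = ρ ∧ x = (1 / 2) * condMutualInfo ρE }

/-- Outer product `|ψ⟩⟨ψ|`. -/
def outer {n : Type*} (ψ : n → ℂ) : Matrix n n ℂ :=
  Matrix.vecMulVec ψ (star ψ)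

/-- Trace norm of a Hermitian matrix: sum of the absolute values of its eigenvalues. -/
def traceNorm {n : Type*} [Fintype n] (X : Matrix n n ℂ) : ℝ :=
  if h : X.IsHermitian then ∑ i, |h.eigenvalues i| else 0

/-- Entanglement of formation: infimum of average entanglement entropy over all
finite pure-state ensembles for `ρ`. -/
def EoF {A B : Type*} [Fintype A] [Fintype B] (ρ : Matrix (A × B) (A × B) ℂ) : ℝ :=
  sInf { x : ℝ | ∃ (n : ℕ) (p : Fin n → ℝ) (ψ : Fin n → A × B → ℂ),
    (∀ k, 0 ≤ p k) ∧ (∑ k, p k) = 1 ∧ (∀ k, ∑ i, ‖ψ k i‖ ^ 2 = 1) ∧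
    (∑ k, (p k : ℂ) • outer (ψ k)) = ρ ∧
    x = ∑ k, p k * vonNeumannEntropy (ptraceR (outer (ψ k))) }

/-- The function `η` : `η(x) = -x log₂ x` for `x ≤ 1/4`, `1/2` otherwise. -/
def eta (x : ℝ) : ℝ := if x ≤ 1 / 4 then -(x * Real.logb 2 x) else 1 / 2

section Helpers

lemma hlp_spectral {n : Type*} [Fintype n] {X : Matrix n n ℂ} (h : X.IsHermitian) :
    ∃ U : Matrix n n ℂ, Uᴴ * U = 1 ∧ U * Uᴴ = 1 ∧
      X = U * diagonal (fun i => ((h.eigenvalues i : ℝ) : ℂ)) * Uᴴ ∧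
      ∀ f : ℝ → ℝ, cfc f X = U * diagonal (fun i => ((f (h.eigenvalues i) : ℝ) : ℂ)) * Uᴴ := by
  refine ⟨h.eigenvectorUnitary, ?_, ?_, ?_, ?_⟩
  · exact Unitary.coe_star_mul_self h.eigenvectorUnitary
  · exact Unitary.coe_mul_star_self h.eigenvectorUnitary
  · exact h.spectral_theorem
  · intro f
    exact h.cfc_eq f

lemma hlp_ent_eq {n : Type*} [Fintype n] {X : Matrix n n ℂ} (h : X.IsHermitian) :
    vonNeumannEntropy X = (Real.log 2)⁻¹ * ∑ i, Real.negMulLog (h.eigenvalues i) := by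
  unfold vonNeumannEntropy
  rw [dif_pos h, Finset.mul_sum]
  refine Finset.sum_congr rfl fun i _ => ?_
  unfold Real.negMulLog Real.logb
  ring

lemma hlp_ent_roots {n : Type*} [Fintype n] {X : Matrix n n ℂ} (h : X.IsHermitian) :
    vonNeumannEntropy X =
      (Real.log 2)⁻¹ * (X.charpoly.roots.map (fun z => Real.negMulLog z.re)).sum := by
  rw [hlp_ent_eq h, h.roots_charpoly_eq_eigenvalues, Multiset.map_map]
  simp [Function.comp_def]

lemma hlp_ent_comm {m n : Type*} [Fintype m] [Fintype n] (L : Matrix m n ℂ) :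
    vonNeumannEntropy (Lᴴ * L) = vonNeumannEntropy (L * Lᴴ) := by
  rw [hlp_ent_roots (isHermitian_conjTranspose_mul_self L),
    hlp_ent_roots (isHermitian_mul_conjTranspose_self L)]
  congr 1
  have := congrArg (fun p : Polynomial ℂ => (p.roots.map (fun z => Real.negMulLog z.re)).sum)
    (charpoly_mul_comm' L Lᴴ)
  rw [Polynomial.roots_mul, Polynomial.roots_mul] at this
  · simpa [Multiset.map_nsmul, Multiset.sum_nsmul] using this.symm
  · exact mul_ne_zero (pow_ne_zero _ Polynomial.X_ne_zero) (charpoly_monic _).ne_zero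
  · exact mul_ne_zero (pow_ne_zero _ Polynomial.X_ne_zero) (charpoly_monic _).ne_zero

lemma hlp_ent_conj {n : Type*} [Fintype n] {X U : Matrix n n ℂ} (h : X.IsHermitian)
    (hU : U * Uᴴ = 1) : vonNeumannEntropy (Uᴴ * X * U) = vonNeumannEntropy X := by
  rw [hlp_ent_roots h, hlp_ent_roots (isHermitian_conjTranspose_mul_mul U h)]
  rw [Matrix.charpoly_mul_comm, ← Matrix.mul_assoc, hU, Matrix.one_mul]

lemma hlp_ent_trace {n : Type*} [Fintype n] {X : Matrix n n ℂ} (h : X.IsHermitian) :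
    vonNeumannEntropy X = (Real.log 2)⁻¹ * (cfc Real.negMulLog X).trace.re := by
  obtain ⟨U, hU, hU', hX, hf⟩ := hlp_spectral h
  rw [hlp_ent_eq h, hf, Matrix.mul_assoc, Matrix.trace_mul_comm, Matrix.mul_assoc, hU]
  simp [Matrix.trace]

open scoped Matrix.Norms.L2Operator in
lemma hlp_cfc_cont {n : Type*} [Fintype n] (f : ℝ → ℝ) (hf : Continuous f) :
    ContinuousOn (fun X : Matrix n n ℂ => cfc f X) {X | X.IsHermitian} := by
  refine ContinuousOn.cfc_of_mem_nhdsSet (s := Set.univ) f Filter.univ_mem continuousOn_id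
    (fun x hx => hx) hf.continuousOn

lemma hlp_ent_cont {n : Type*} [Fintype n] :
    ContinuousOn (fun X : Matrix n n ℂ => vonNeumannEntropy X) {X | X.IsHermitian} := by
  have h1 : ContinuousOn (fun X : Matrix n n ℂ =>
      (Real.log 2)⁻¹ * (cfc Real.negMulLog X).trace.re) {X | X.IsHermitian} := by
    have h2 := hlp_cfc_cont (n := n) Real.negMulLog Real.continuous_negMulLog
    have h3 : Continuous (fun Y : Matrix n n ℂ => (Real.log 2)⁻¹ * Y.trace.re) :=
      continuous_const.mul (Complex.continuous_re.comp (Continuous.matrix_trace continuous_id))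
    exact h3.comp_continuousOn h2
  exact h1.congr fun X hX => hlp_ent_trace hX

lemma hlp_schur {n : Type*} [Fintype n] {X : Matrix n n ℂ} (h : X.PosSemidef) :
    vonNeumannEntropy X ≤ (Real.log 2)⁻¹ * ∑ i, Real.negMulLog (X i i).re := by
  obtain ⟨U, hU, hU', hX, -⟩ := hlp_spectral h.1
  rw [hlp_ent_eq h.1]
  refine mul_le_mul_of_nonneg_left ?_ (inv_nonneg.2 (Real.log_nonneg (by norm_num)))
  set l := h.1.eigenvalues with hl
  have hl0 : ∀ i, 0 ≤ l i := h.eigenvalues_nonneg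
  have hd : ∀ i, (X i i).re = ∑ j, ‖U i j‖ ^ 2 * l j := by
    intro i
    conv_lhs => rw [hX]
    rw [Matrix.mul_apply, Complex.re_sum]
    refine Finset.sum_congr rfl fun j _ => ?_
    rw [Matrix.mul_diagonal, conjTranspose_apply, mul_right_comm]
    simp only [RCLike.star_def, Complex.mul_conj, Complex.normSq_eq_norm_sq]
    rw [← Complex.ofReal_mul, Complex.ofReal_re]
  have hrow : ∀ i, ∑ j, ‖U i j‖ ^ 2 = 1 := by
    intro i
    have := congrFun (congrFun hU' i) i
    rw [Matrix.mul_apply] at this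
    simp only [conjTranspose_apply, RCLike.star_def, Complex.mul_conj, Complex.normSq_eq_norm_sq,
      Matrix.one_apply_eq] at this
    exact_mod_cast this
  have hcol : ∀ j, ∑ i, ‖U i j‖ ^ 2 = 1 := by
    intro i
    have := congrFun (congrFun hU i) i
    rw [Matrix.mul_apply] at this
    simp only [conjTranspose_apply, RCLike.star_def, mul_comm _ (U _ _), Complex.mul_conj,
      Complex.normSq_eq_norm_sq, Matrix.one_apply_eq] at this
    exact_mod_cast this
  calc ∑ j, Real.negMulLog (l j) = ∑ j, (∑ i, ‖U i j‖ ^ 2) * Real.negMulLog (l j) := by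
        simp [hcol]
    _ = ∑ i, ∑ j, ‖U i j‖ ^ 2 * Real.negMulLog (l j) := by
        simp_rw [Finset.sum_mul]; exact Finset.sum_comm
    _ ≤ ∑ i, Real.negMulLog (X i i).re := by
        refine Finset.sum_le_sum fun i _ => ?_
        rw [hd i]
        have := Real.concaveOn_negMulLog.le_map_sum (t := Finset.univ)
          (w := fun j => ‖U i j‖ ^ 2) (p := l) (fun j _ => by positivity) (hrow i)
          (fun j _ => hl0 j)
        simpa using this

lemma hlp_negMulLog_sum {α : Type*} [Fintype α] [Nonempty α] (d : α → ℝ) (hd : ∀ a, 0 ≤ d a) :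
    ∑ a, Real.negMulLog (d a) ≤
      Real.negMulLog (∑ a, d a) + (∑ a, d a) * Real.log (Fintype.card α) := by
  have hc : (0 : ℝ) < Fintype.card α := by exact_mod_cast Fintype.card_pos
  have := Real.concaveOn_negMulLog.le_map_sum (t := Finset.univ)
          (w := fun _ : α => (Fintype.card α : ℝ)⁻¹) (p := d) (fun j _ => by positivity)
          (by simp [hc.ne']) (fun j _ => hd j)
  simp only [smul_eq_mul, ← Finset.mul_sum] at this
  rw [Real.negMulLog_mul, Real.negMulLog, Real.log_inv] at this
  have h2 := mul_le_mul_of_nonneg_left this hc.le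
  have e1 : (Fintype.card α : ℝ) * ((Fintype.card α : ℝ)⁻¹ * ∑ i, Real.negMulLog (d i))
    = ∑ i, Real.negMulLog (d i) := by field_simp
  rw [e1] at h2
  refine h2.trans (le_of_eq ?_)
  field_simp
  ring

lemma hlp_ptraceL_posSemidef {α β : Type*} [Fintype α] [Fintype β]
    {X : Matrix (α × β) (α × β) ℂ} (h : X.PosSemidef) : (ptraceL X).PosSemidef := by
  have : ptraceL X = ∑ a, X.submatrix (fun b => (a, b)) (fun b => (a, b)) := by
    ext i j
    simp [ptraceL, Matrix.sum_apply]
  rw [this]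
  exact posSemidef_sum _ fun a _ => h.submatrix _

lemma hlp_ptraceL_trace {α β : Type*} [Fintype α] [Fintype β]
    (X : Matrix (α × β) (α × β) ℂ) : (ptraceL X).trace = X.trace := by
  simp only [Matrix.trace, ptraceL, Matrix.diag, Fintype.sum_prod_type]
  exact Finset.sum_comm

lemma hlp_up {α β : Type*} [Fintype α] [Fintype β]
    {X : Matrix (α × β) (α × β) ℂ} (h : IsState X) :
    vonNeumannEntropy X ≤
      vonNeumannEntropy (ptraceL X) + (Real.log 2)⁻¹ * Real.log (Fintype.card α) := by
  have hne : Nonempty α := by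
    by_contra hc
    rw [not_nonempty_iff] at hc
    have := h.2
    simp [Matrix.trace] at this
  have hP := hlp_ptraceL_posSemidef h.1
  obtain ⟨V, hV, hV', hX, -⟩ := hlp_spectral hP.1
  set l := hP.1.eigenvalues with hl
  set W : Matrix (α × β) (α × β) ℂ := (1 : Matrix α α ℂ) ⊗ₖ V with hW
  have hWW : W * Wᴴ = 1 := by
    rw [hW, conjTranspose_kronecker, ← mul_kronecker_mul, hV', conjTranspose_one, Matrix.mul_one,
      one_kronecker_one]
  have hY := h.1.conjTranspose_mul_mul_same W
  rw [← hlp_ent_conj h.1.1 (U := W) (by convert hWW)]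
  set Y := Wᴴ * X * W with hYdef
  have hYp : ptraceL Y = diagonal (fun i => ((l i : ℝ) : ℂ)) := by
    have : ptraceL Y = Vᴴ * ptraceL X * V := by
      ext i j
      have hent : ∀ a, Y (a, i) (a, j) =
          ∑ e', ∑ e, star (V e i) * X (a, e) (a, e') * V e' j := by
        intro a
        simp [hYdef, hW, Matrix.mul_apply, conjTranspose_apply, kroneckerMap_apply,
          Fintype.sum_prod_type, Matrix.one_apply, Finset.sum_mul, ite_mul, apply_ite]
      simp only [ptraceL, Matrix.mul_apply, conjTranspose_apply, hent, Finset.sum_mul,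
        Finset.mul_sum]
      rw [Finset.sum_comm]
      refine Finset.sum_congr rfl fun e' _ => ?_
      rw [Finset.sum_comm]
    rw [this, hX]
    calc _ = (Vᴴ * V) * diagonal (fun i => ((l i : ℝ) : ℂ)) * (Vᴴ * V) := by
          simp only [Matrix.mul_assoc]
      _ = _ := by rw [hV]; simp
  refine (hlp_schur hY).trans ?_
  rw [hlp_ent_eq hP.1, ← mul_add]
  refine mul_le_mul_of_nonneg_left ?_ (inv_nonneg.2 (Real.log_nonneg (by norm_num)))
  have hsum : ∀ e, ∑ a, (Y (a, e) (a, e)).re = l e := by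
    intro e
    have := congrArg Complex.re (congrFun (congrFun hYp e) e)
    simpa [ptraceL] using this
  have hl1 : ∑ e, l e = 1 := by
    have := hP.1.trace_eq_sum_eigenvalues
    rw [hlp_ptraceL_trace, h.2] at this
    have h2 := congrArg Complex.re this.symm
    simpa using h2
  rw [Fintype.sum_prod_type, Finset.sum_comm]
  calc ∑ e, ∑ a, Real.negMulLog (Y (a, e) (a, e)).re
      ≤ ∑ e, (Real.negMulLog (l e) + l e * Real.log (Fintype.card α)) := by
        refine Finset.sum_le_sum fun e _ => ?_
        have := hlp_negMulLog_sum (fun a => (Y (a, e) (a, e)).re)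
          (fun a => (Complex.le_def.1 (hY.diag_nonneg (i := (a, e)))).1)
        rwa [hsum e] at this
    _ = _ := by rw [Finset.sum_add_distrib, ← Finset.sum_mul, hl1, one_mul]

open scoped MatrixOrder in
lemma hlp_factor {n : Type*} [Fintype n] {X : Matrix n n ℂ} (h : X.PosSemidef) :
    ∃ M : Matrix n n ℂ, X = Mᴴ * M :=
  CStarAlgebra.nonneg_iff_eq_star_mul_self.mp h.nonneg

lemma hlp_down {α β : Type*} [Fintype α] [Fintype β]
    {X : Matrix (α × β) (α × β) ℂ} (h : IsState X) :
    vonNeumannEntropy (ptraceL X) ≤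
      vonNeumannEntropy X + (Real.log 2)⁻¹ * Real.log (Fintype.card α) := by
  obtain ⟨M, hM⟩ := hlp_factor h.1
  obtain ⟨L, L_def⟩ : ∃ L : Matrix (α × (α × β)) β ℂ, ∀ x e, L x e = M x.2 (x.1, e) :=
    ⟨fun x e => M x.2 (x.1, e), fun _ _ => rfl⟩
  have h1 : ptraceL X = Lᴴ * L := by
    ext i j
    rw [hM]
    simp only [ptraceL, Matrix.mul_apply, Fintype.sum_prod_type, conjTranspose_apply, L_def]
  have h2 : ptraceL (L * Lᴴ) = M * Mᴴ := by
    ext i j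
    simp only [ptraceL, Matrix.mul_apply, Fintype.sum_prod_type, conjTranspose_apply, L_def]
  have h3 : vonNeumannEntropy X = vonNeumannEntropy (ptraceL (L * Lᴴ)) := by
    rw [h2, hM, hlp_ent_comm]
  rw [h3, h1, hlp_ent_comm]
  refine hlp_up ⟨posSemidef_self_mul_conjTranspose L, ?_⟩
  rw [Matrix.trace_mul_comm, ← h1, hlp_ptraceL_trace, h.2]

lemma hlp_ptraceR_add {n m : Type*} [Fintype n] [Fintype m] (X Y : Matrix (n × m) (n × m) ℂ) :
    ptraceR (X + Y) = ptraceR X + ptraceR Y := by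
  ext i j
  simp [ptraceR, Finset.sum_add_distrib]

lemma hlp_ptraceR_trace {n m : Type*} [Fintype n] [Fintype m] (X : Matrix (n × m) (n × m) ℂ) :
    (ptraceR X).trace = X.trace := by
  simp only [Matrix.trace, ptraceR, Matrix.diag, Fintype.sum_prod_type]

lemma hlp_ptraceR_conj {n m : Type*} [Fintype n] [Fintype m] (X : Matrix (n × m) (n × m) ℂ)
    (K L : Matrix n n ℂ) :
    ptraceR ((K ⊗ₖ (1 : Matrix m m ℂ)) * X * (L ⊗ₖ (1 : Matrix m m ℂ))) =
      K * ptraceR X * L := by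
  ext i j
  have hent : ∀ b, ((K ⊗ₖ (1 : Matrix m m ℂ)) * X * (L ⊗ₖ (1 : Matrix m m ℂ))) (i, b) (j, b) =
      ∑ y, ∑ x, K i x * X (x, b) (y, b) * L y j := by
    intro b
    simp [Matrix.mul_apply, kroneckerMap_apply, Fintype.sum_prod_type, Matrix.one_apply,
      Finset.sum_mul]
  simp only [ptraceR, Matrix.mul_apply, hent, Finset.sum_mul, Finset.mul_sum]
  rw [Finset.sum_comm]
  refine Finset.sum_congr rfl fun e' _ => ?_
  rw [Finset.sum_comm]

lemma hlp_ptraceR_single {n m : Type*} [Fintype n] [Fintype m] (Z : Matrix n n ℂ) (e : m) :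
    ptraceR (Z ⊗ₖ Matrix.single e e (1 : ℂ)) = Z := by
  ext i j
  simp [ptraceR, kroneckerMap_apply, Matrix.single_apply]

lemma hlp_sqrt {n : Type*} [Fintype n] {X : Matrix n n ℂ} (h : X.PosSemidef) :
    (cfc Real.sqrt X)ᴴ = cfc Real.sqrt X ∧ cfc Real.sqrt X * cfc Real.sqrt X = X := by
  obtain ⟨U, hU, hU', hX, hf⟩ := hlp_spectral h.1
  have h0 := h.eigenvalues_nonneg
  rw [hf]
  constructor
  · simp only [conjTranspose_mul, conjTranspose_conjTranspose, diagonal_conjTranspose,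
      Matrix.mul_assoc]
    congr 3
    ext i
    simp
  · conv_rhs => rw [hX]
    calc _ = U * (diagonal (fun i => ((√(h.1.eigenvalues i) : ℝ) : ℂ)) * (Uᴴ * U) *
          diagonal (fun i => ((√(h.1.eigenvalues i) : ℝ) : ℂ))) * Uᴴ := by
          simp only [Matrix.mul_assoc]
      _ = _ := by
        rw [hU, Matrix.mul_one, diagonal_mul_diagonal]
        congr 3
        ext i
        rw [← Complex.ofReal_mul, Real.mul_self_sqrt (h0 i)]

lemma hlp_pinv {n : Type*} [Fintype n] {X : Matrix n n ℂ} (h : X.PosSemidef) :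
    ∃ Q : Matrix n n ℂ, Qᴴ = Q ∧ (1 - Q * X * Q).PosSemidef ∧ cfc Real.sqrt X * Q * X = X := by
  obtain ⟨U, hU, hU', hX, hf⟩ := hlp_spectral h.1
  have h0 := h.eigenvalues_nonneg
  set l := h.1.eigenvalues with hl
  refine ⟨U * diagonal (fun i => (((√(l i))⁻¹ : ℝ) : ℂ)) * Uᴴ, ?_, ?_, ?_⟩
  · simp only [conjTranspose_mul, conjTranspose_conjTranspose, diagonal_conjTranspose,
      Matrix.mul_assoc]
    congr 3
    ext i
    simp
  · have : 1 - U * diagonal (fun i => (((√(l i))⁻¹ : ℝ) : ℂ)) * Uᴴ * X *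
        (U * diagonal (fun i => (((√(l i))⁻¹ : ℝ) : ℂ)) * Uᴴ) =
        U * diagonal (fun i => ((1 - (√(l i))⁻¹ * l i * (√(l i))⁻¹ : ℝ) : ℂ)) * Uᴴ := by
      conv_lhs => rw [hX]
      have e1 : (diagonal (fun i => ((1 - (√(l i))⁻¹ * l i * (√(l i))⁻¹ : ℝ) : ℂ)) :
          Matrix n n ℂ) = 1 - diagonal (fun i => (((√(l i))⁻¹ : ℝ) : ℂ)) *
          diagonal (fun i => ((l i : ℝ) : ℂ)) * diagonal (fun i => (((√(l i))⁻¹ : ℝ) : ℂ)) := by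
        rw [diagonal_mul_diagonal, diagonal_mul_diagonal, ← diagonal_one, diagonal_sub]
        congr 1
        ext i
        push_cast
        rfl
      rw [e1, Matrix.mul_sub, Matrix.sub_mul, Matrix.mul_one, hU']
      congr 1
      calc _ = U * (diagonal (fun i => (((√(l i))⁻¹ : ℝ) : ℂ)) * (Uᴴ * U) *
          diagonal (fun i => ((l i : ℝ) : ℂ)) * (Uᴴ * U) *
            diagonal (fun i => (((√(l i))⁻¹ : ℝ) : ℂ))) * Uᴴ := by
            simp only [Matrix.mul_assoc]
        _ = _ := by rw [hU, Matrix.mul_one, Matrix.mul_one]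
    rw [this]
    refine PosSemidef.mul_mul_conjTranspose_same (PosSemidef.diagonal fun i => ?_) U
    have : (0 : ℝ) ≤ 1 - (√(l i))⁻¹ * l i * (√(l i))⁻¹ := by
      rcases (h0 i).eq_or_lt with h1 | h1
      · rw [← h1]; simp
      · have h2 : √(l i) ≠ 0 := (Real.sqrt_pos.2 h1).ne'
        have h3 : (√(l i))⁻¹ * l i * (√(l i))⁻¹ = 1 := by
          nth_rewrite 2 [← Real.mul_self_sqrt (h0 i)]
          field_simp
        rw [h3]; simp
    exact Complex.zero_le_real.2 this
  · rw [hf]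
    conv_rhs => rw [hX]
    conv_lhs => enter [2]; rw [hX]
    calc _ = U * (diagonal (fun i => ((√(l i) : ℝ) : ℂ)) * (Uᴴ * U) *
          diagonal (fun i => (((√(l i))⁻¹ : ℝ) : ℂ)) * (Uᴴ * U) *
            diagonal (fun i => ((l i : ℝ) : ℂ))) * Uᴴ := by
            simp only [Matrix.mul_assoc]
      _ = _ := by
        rw [hU, Matrix.mul_one, Matrix.mul_one, diagonal_mul_diagonal, diagonal_mul_diagonal]
        congr 3
        ext i
        rw [← Complex.ofReal_mul, ← Complex.ofReal_mul]
        congr 1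
        rcases (h0 i).eq_or_lt with h1 | h1
        · rw [← h1]; simp
        · have h2 : √(l i) ≠ 0 := (Real.sqrt_pos.2 h1).ne'
          field_simp

lemma hlp_single_psd {m : Type*} [Fintype m] (e : m) :
    (Matrix.single e e (1 : ℂ)).PosSemidef := by
  rw [← diagonal_single]
  refine PosSemidef.diagonal fun i => ?_
  by_cases h : i = e
  · subst h; simp
  · simp [h]

lemma hlp_kron_cont {n m X : Type*} [TopologicalSpace X] {N : Matrix m m ℂ}
    {f : X → Matrix n n ℂ} (hf : Continuous f) : Continuous (fun p => f p ⊗ₖ N) := by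
  refine continuous_matrix fun i j => ?_
  simp only [kroneckerMap_apply]
  exact (hf.matrix_elem _ _).mul continuous_const

lemma hlp_ext_cont {n m : Type*} [Fintype n] [Fintype m] (R : Matrix (n × m) (n × m) ℂ)
    (ρ Q : Matrix n n ℂ) (N : Matrix m m ℂ) :
    Continuous (fun p : Matrix n n ℂ × Matrix n n ℂ =>
        ((p.1 * Q) ⊗ₖ (1 : Matrix m m ℂ)) * R * ((p.1 * Q)ᴴ ⊗ₖ (1 : Matrix m m ℂ)) +
      (p.2 - (p.1 * Q) * ρ * (p.1 * Q)ᴴ) ⊗ₖ N) := by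
  have h1 : Continuous (fun p : Matrix n n ℂ × Matrix n n ℂ => p.1 * Q) :=
    continuous_fst.matrix_mul continuous_const
  have h2 := h1.matrix_conjTranspose
  have h3 := ((hlp_kron_cont (N := (1 : Matrix m m ℂ)) h1).matrix_mul
    (continuous_const (y := R))).matrix_mul (hlp_kron_cont (N := (1 : Matrix m m ℂ)) h2)
  have h4 : Continuous (fun p : Matrix n n ℂ × Matrix n n ℂ =>
      p.2 - (p.1 * Q) * ρ * (p.1 * Q)ᴴ) :=
    continuous_snd.sub ((h1.matrix_mul continuous_const).matrix_mul h2)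
  exact h3.add (hlp_kron_cont (N := N) h4)

set_option maxHeartbeats 1000000 in
lemma hlp_ext {n m : Type*} [Fintype n] [Fintype m] {R : Matrix (n × m) (n × m) ℂ}
    (hR : IsState R) (hρ : (ptraceR R).PosSemidef) :
    ∃ F : Matrix n n ℂ → Matrix (n × m) (n × m) ℂ, F (ptraceR R) = R ∧
      ContinuousOn F {σ | IsState σ} ∧
      ∀ σ, IsState σ → IsState (F σ) ∧ ptraceR (F σ) = σ := by
  have hne : Nonempty m := by
    by_contra hc
    rw [not_nonempty_iff] at hc
    have := hR.2
    simp [Matrix.trace] at this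
  obtain ⟨e⟩ := hne
  set ρ := ptraceR R with hρdef
  obtain ⟨Q, hQ, hQ1, hQ2⟩ := hlp_pinv hρ
  let K : Matrix n n ℂ → Matrix n n ℂ := fun σ => cfc Real.sqrt σ * Q
  let F : Matrix n n ℂ → Matrix (n × m) (n × m) ℂ := fun σ =>
    (K σ ⊗ₖ (1 : Matrix m m ℂ)) * R * ((K σ)ᴴ ⊗ₖ (1 : Matrix m m ℂ)) +
      (σ - K σ * ρ * (K σ)ᴴ) ⊗ₖ Matrix.single e e (1 : ℂ)
  have hpt : ∀ σ, ptraceR (F σ) = σ := by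
    intro σ
    simp only [F]
    rw [hlp_ptraceR_add, hlp_ptraceR_conj, hlp_ptraceR_single, ← hρdef]
    abel
  refine ⟨F, ?_, ?_, ?_⟩
  · have h1 : K ρ * ρ = ρ := hQ2
    have h1' : ρ * (K ρ)ᴴ = ρ := by
      have := congrArg conjTranspose h1
      rwa [conjTranspose_mul, hρ.1.eq] at this
    have hKR : (K ρ ⊗ₖ (1 : Matrix m m ℂ)) * R = R := by
      obtain ⟨M, hM⟩ := hlp_factor hR.1
      set T : Matrix (n × m) (n × m) ℂ := (1 - K ρ) ⊗ₖ (1 : Matrix m m ℂ) with hT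
      have hTH : Tᴴ = (1 - K ρ)ᴴ ⊗ₖ (1 : Matrix m m ℂ) := by
        rw [hT, conjTranspose_kronecker, conjTranspose_one]
      have h2 : T * R * Tᴴ = 0 := by
        rw [← (hR.1.mul_mul_conjTranspose_same T).trace_eq_zero_iff, ← hlp_ptraceR_trace, hTH, hT,
          hlp_ptraceR_conj, ← hρdef, Matrix.sub_mul 1 (K ρ) ρ, h1]
        simp
      have h3 : T * Mᴴ = 0 := by
        rw [← self_mul_conjTranspose_eq_zero, conjTranspose_mul, conjTranspose_conjTranspose,
          ← h2, hM]
        simp only [Matrix.mul_assoc]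
      have h4 : T * R = 0 := by rw [hM, ← Matrix.mul_assoc, h3, Matrix.zero_mul]
      have h5 : (1 : Matrix n n ℂ) ⊗ₖ (1 : Matrix m m ℂ) = T + K ρ ⊗ₖ (1 : Matrix m m ℂ) := by
        rw [hT, ← add_kronecker, sub_add_cancel]
      calc (K ρ ⊗ₖ (1 : Matrix m m ℂ)) * R = (T + K ρ ⊗ₖ (1 : Matrix m m ℂ)) * R := by
            rw [Matrix.add_mul, h4, zero_add]
        _ = R := by rw [← h5, one_kronecker_one, Matrix.one_mul]
    have hRK : R * ((K ρ)ᴴ ⊗ₖ (1 : Matrix m m ℂ)) = R := by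
      have := congrArg conjTranspose hKR
      rwa [conjTranspose_mul, hR.1.1.eq, conjTranspose_kronecker, conjTranspose_one] at this
    simp only [F]
    rw [hKR, hRK, h1, h1', sub_self, zero_kronecker, add_zero]
  · have hs : ContinuousOn (fun σ : Matrix n n ℂ => cfc Real.sqrt σ) {σ | IsState σ} :=
      (hlp_cfc_cont Real.sqrt Real.continuous_sqrt).mono fun σ hσ => hσ.1.1
    have hs2 : ContinuousOn (fun σ : Matrix n n ℂ => (cfc Real.sqrt σ, σ)) {σ | IsState σ} :=
      hs.prodMk continuousOn_id
    have hG := hlp_ext_cont R ρ Q (Matrix.single e e (1 : ℂ))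
    have hs3 := hG.comp_continuousOn hs2
    exact hs3
  · intro σ hσ
    refine ⟨⟨?_, ?_⟩, hpt σ⟩
    · obtain ⟨hs1, hs2⟩ := hlp_sqrt hσ.1
      refine PosSemidef.add ?_ ?_
      · have := hR.1.mul_mul_conjTranspose_same (K σ ⊗ₖ (1 : Matrix m m ℂ))
        rwa [conjTranspose_kronecker, conjTranspose_one] at this
      · refine PosSemidef.kronecker ?_ ?_
        · have h1 := hQ1.mul_mul_conjTranspose_same (cfc Real.sqrt σ)
          have h2 : cfc Real.sqrt σ * (1 - Q * ρ * Q) * (cfc Real.sqrt σ)ᴴ =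
              σ - K σ * ρ * (K σ)ᴴ := by
            simp only [K, conjTranspose_mul, hQ, hs1]
            rw [Matrix.mul_sub, Matrix.sub_mul, Matrix.mul_one, hs2]
            simp only [Matrix.mul_assoc]
          rwa [h2] at h1
        · exact hlp_single_psd e
    · rw [← hlp_ptraceR_trace, hpt, hσ.2]

lemma hlp_traceNorm {n : Type*} [Fintype n] {X : Matrix n n ℂ} (h : X.IsHermitian) (i j : n) :
    ‖X i j‖ ≤ traceNorm X := by
  obtain ⟨U, hU, hU', hX, -⟩ := hlp_spectral h
  have hUm : U ∈ Matrix.unitaryGroup n ℂ := (Matrix.mem_unitaryGroup_iff).2 hU'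
  unfold traceNorm
  rw [dif_pos h]
  conv_lhs => rw [hX]
  rw [Matrix.mul_apply]
  refine (norm_sum_le _ _).trans (Finset.sum_le_sum fun k _ => ?_)
  rw [Matrix.mul_diagonal, conjTranspose_apply, norm_mul, norm_mul, norm_star, Complex.norm_real,
    Real.norm_eq_abs]
  have h1 := entry_norm_bound_of_unitary hUm i k
  have h2 := entry_norm_bound_of_unitary hUm j k
  calc _ ≤ 1 * |h.eigenvalues k| * 1 := by gcongr
    _ = _ := by ring

lemma hlp_bdd {A B : Type*} [Fintype A] [Fintype B] (σ : Matrix (A × B) (A × B) ℂ) :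
    BddBelow { x : ℝ | ∃ (d : ℕ) (ρE : Matrix (A × B × Fin d) (A × B × Fin d) ℂ),
    IsState ρE ∧ margAB ρE = σ ∧ x = (1 / 2) * condMutualInfo ρE } := by
  refine ⟨-((Real.log 2)⁻¹ * Real.log (Fintype.card A)), ?_⟩
  rintro x ⟨d, X, hX, -, rfl⟩
  have h1 := hlp_up hX
  have hB : ptraceL X = margBE X := rfl
  let f : B × A × Fin d ≃ A × B × Fin d :=
    ⟨fun x => (x.2.1, x.1, x.2.2), fun x => (x.2.1, x.1, x.2.2), fun _ => rfl, fun _ => rfl⟩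
  have hA : margAE X = ptraceL (X.submatrix f f) := rfl
  have hAs : IsState (margAE X) := by
    constructor
    · rw [hA]; exact hlp_ptraceL_posSemidef (hX.1.submatrix f)
    · rw [hA, hlp_ptraceL_trace, ← hX.2]
      simp only [Matrix.trace, Matrix.diag, submatrix_apply]
      exact f.sum_comp (fun i => X i i)
  have h2 := hlp_down hAs
  have hE : ptraceL (margAE X) = margE X := rfl
  unfold condMutualInfo
  rw [hE] at h2
  rw [hB] at h1
  linarith

lemma hlp_marg_herm {A B E : Type*} [Fintype A] [Fintype B] [Fintype E]
    {X : Matrix (A × B × E) (A × B × E) ℂ} (h : X.IsHermitian) :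
    (margAE X).IsHermitian ∧ (margBE X).IsHermitian ∧ (margE X).IsHermitian := by
  refine ⟨?_, ?_, ?_⟩ <;> ext i j <;>
    simp only [margAE, margBE, margE, conjTranspose_apply, star_sum, h.apply]

lemma hlp_cmi_cont {A B E : Type*} [Fintype A] [Fintype B] [Fintype E] :
    ContinuousOn (fun X : Matrix (A × B × E) (A × B × E) ℂ => condMutualInfo X)
      {X | X.IsHermitian} := by
  have c1 : Continuous (fun X : Matrix (A × B × E) (A × B × E) ℂ => margAE X) := by
    refine continuous_matrix fun i j => ?_
    exact continuous_finsetSum _ fun b _ => continuous_id.matrix_elem _ _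
  have c2 : Continuous (fun X : Matrix (A × B × E) (A × B × E) ℂ => margBE X) := by
    refine continuous_matrix fun i j => ?_
    exact continuous_finsetSum _ fun b _ => continuous_id.matrix_elem _ _
  have c3 : Continuous (fun X : Matrix (A × B × E) (A × B × E) ℂ => margE X) := by
    refine continuous_matrix fun i j => ?_
    exact continuous_finsetSum _ fun b _ => continuous_finsetSum _ fun b _ =>
      continuous_id.matrix_elem _ _
  exact (((hlp_ent_cont.comp c1.continuousOn fun X hX => (hlp_marg_herm hX).1).add
    (hlp_ent_cont.comp c2.continuousOn fun X hX => (hlp_marg_herm hX).2.1)).sub hlp_ent_cont).sub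
    (hlp_ent_cont.comp c3.continuousOn fun X hX => (hlp_marg_herm hX).2.2)

lemma hlp_submatrix_state {m n : Type*} [Fintype m] [Fintype n] {X : Matrix n n ℂ} (h : IsState X)
    (f : m ≃ n) : IsState (X.submatrix f f) := by
  refine ⟨h.1.submatrix f, ?_⟩
  rw [← h.2]
  simp only [Matrix.trace, Matrix.diag, submatrix_apply]
  exact f.sum_comp (fun i => X i i)

lemma hlp_nonempty {A B : Type*} [Fintype A] [Fintype B] {ρ : Matrix (A × B) (A × B) ℂ}
    (hρ : IsState ρ) :
    { x : ℝ | ∃ (d : ℕ) (ρE : Matrix (A × B × Fin d) (A × B × Fin d) ℂ),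
    IsState ρE ∧ margAB ρE = ρ ∧ x = (1 / 2) * condMutualInfo ρE }.Nonempty := by
  let f : A × B × Fin 1 ≃ A × B :=
    ⟨fun x => (x.1, x.2.1), fun x => (x.1, x.2, 0), fun x => by
      ext <;> simp, fun _ => rfl⟩
  refine ⟨_, 1, ρ.submatrix f f, hlp_submatrix_state hρ f, ?_, rfl⟩
  ext i j
  simp [margAB, f]

end Helpers

/-- Squashed entanglement is upper semicontinuous on the set of states:
for every state `ρ` and every `c > E_sq(ρ)`, there is a trace-norm neighbourhood of `ρ`
within the set of states on which `E_sq < c`. -/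
theorem squashedEntanglement_upperSemicontinuous
    {A B : Type*} [Fintype A] [Fintype B]
    (ρ : Matrix (A × B) (A × B) ℂ) (hρ : IsState ρ)
    (c : ℝ) (hc : Esq ρ < c) :
    ∃ δ > (0 : ℝ), ∀ σ : Matrix (A × B) (A × B) ℂ,
      IsState σ → traceNorm (ρ - σ) < δ → Esq σ < c := by
  obtain ⟨x, ⟨d, R, hR, hRρ, rfl⟩, hx⟩ := exists_lt_of_csInf_lt (hlp_nonempty hρ) hc
  let f : A × B × Fin d ≃ (A × B) × Fin d := (Equiv.prodAssoc A B (Fin d)).symm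
  set R' : Matrix ((A × B) × Fin d) ((A × B) × Fin d) ℂ := R.submatrix f.symm f.symm with hR'
  have hp : ptraceR R' = ρ := by rw [← hRρ]; rfl
  obtain ⟨F, hF1, hF2, hF3⟩ := hlp_ext (hlp_submatrix_state hR f.symm : IsState R')
    (by rw [hp]; exact hρ.1)
  have hc1 : ContinuousOn (fun σ => (F σ).submatrix f f) {σ | IsState σ} := by
    have : Continuous (fun Y : Matrix ((A × B) × Fin d) ((A × B) × Fin d) ℂ => Y.submatrix f f) :=
      continuous_id.matrix_submatrix f f
    exact this.comp_continuousOn hF2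
  have hc2 : ContinuousOn (fun σ => (1 / 2) * condMutualInfo ((F σ).submatrix f f))
      {σ | IsState σ} :=
    continuousOn_const.mul (hlp_cmi_cont.comp hc1 fun σ hσ =>
      (hlp_submatrix_state (hF3 σ hσ).1 f).1.1)
  have hρ0 : (F ρ).submatrix f f = R := by
    rw [← hp, hF1]
    ext i j
    simp
  have hev := (hc2 ρ hρ).eventually (gt_mem_nhds (show (1 / 2) * condMutualInfo ((F ρ).submatrix f f) < c by rw [hρ0]; exact hx))
  rw [eventually_nhdsWithin_iff] at hev
  have hev2 : ∀ᶠ σ in nhds (fun i j => ρ i j : A × B → A × B → ℂ),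
      IsState (Matrix.of σ) → (1 / 2) * condMutualInfo ((F (Matrix.of σ)).submatrix f f) < c := hev
  obtain ⟨δ, hδ, hball⟩ := Metric.eventually_nhds_iff.1 hev2
  refine ⟨δ, hδ, fun σ hσ hd => ?_⟩
  have hlt := hball (y := fun i j => σ i j) ?_ hσ
  · refine lt_of_le_of_lt (csInf_le (hlp_bdd σ) ?_) hlt
    refine ⟨d, (F σ).submatrix f f, hlp_submatrix_state (hF3 σ hσ).1 f, ?_, rfl⟩
    conv_rhs => rw [← (hF3 σ hσ).2]
    rfl
  · have hH : (ρ - σ).IsHermitian := hρ.1.1.sub hσ.1.1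
    rw [dist_comm]
    refine (dist_pi_lt_iff hδ).2 fun i => (dist_pi_lt_iff hδ).2 fun j => ?_
    rw [dist_eq_norm]
    exact lt_of_le_of_lt (hlp_traceNorm hH i j) hd

end
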